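/- Let f : [0,1] → ℕ∞ be a preindicatrix. Then there exists a sequence of simple preindicatrices p₀, p₁, p₂, … (each with values in {1,2,3}) with p₀(y) ≥ p₁(y) ≥ p₂(y) ≥ … for every y, such that for every y ∈ [0,1]: f(y) = 1 + Σ_{i=0}^{∞} (pᵢ(y) − 1) in ℕ∞; in particular the series Σᵢ (pᵢ(y) − 1) converges to the finite value f(y) − 1 when f(y) is finite, and diverges to ∞ (i.e., pᵢ(y) ≥ 2 for all i) when f(y) = ∞. -/

import Mathlib

open Set

noncomputable section

/-- The section of `F` over `y`: the set of `x ∈ [0,1]` with `F x = y`. -/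
def Sec (F : ℝ → ℝ) (y : ℝ) : Set ℝ := {x | x ∈ Set.Icc (0:ℝ) 1 ∧ F x = y}

/-- Condition (1) for an `ℕ∞`-valued function `f` on `[0,1]`. -/
def Cond1 (f : ℝ → ℕ∞) : Prop :=
  (∀ y ∈ Set.Ioo (0:ℝ) 1, f y ≠ ⊤ →
    ∃ ε > 0, ∀ y₁ ∈ Set.Icc (0:ℝ) 1, ∀ y₂ ∈ Set.Icc (0:ℝ) 1,
      y - ε < y₁ → y₁ < y → y < y₂ → y₂ < y + ε →
      2 * f y ≤ f y₁ + f y₂ ∧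
      (f y₁ + f y₂ = 2 * f y →
        (∃ k : ℕ, f y₁ = k ∧ Odd k) ∧ (∃ k : ℕ, f y₂ = k ∧ Odd k))) ∧
  (f 0 ≠ ⊤ → ∃ ε > 0, ∀ y₂ ∈ Set.Icc (0:ℝ) 1, 0 < y₂ → y₂ < ε →
    2 * f 0 ≤ 1 + f y₂) ∧
  (f 1 ≠ ⊤ → ∃ ε > 0, ∀ y₁ ∈ Set.Icc (0:ℝ) 1, 1 - ε < y₁ → y₁ < 1 →
    2 * f 1 ≤ f y₁ + 1)

/-- Condition (**) for an `ℕ∞`-valued function `f` at the point `y ∈ [0,1]`,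
with the convention that the term `f y₁` is replaced by `1` when `y = 0` and
the term `f y₂` is replaced by `1` when `y = 1`. -/
def CondStar (f : ℝ → ℕ∞) (y : ℝ) : Prop :=
  ∀ n : ℕ, ∃ ε > 0,
    (∀ y₁ ∈ Set.Icc (0:ℝ) 1, ∀ y₂ ∈ Set.Icc (0:ℝ) 1,
      y - ε < y₁ → y₁ < y → y < y₂ → y₂ < y + ε → (n : ℕ∞) ≤ f y₁ + f y₂) ∧
    (y = 0 → ∀ y₂ ∈ Set.Icc (0:ℝ) 1, 0 < y₂ → y₂ < ε → (n : ℕ∞) ≤ 1 + f y₂) ∧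
    (y = 1 → ∀ y₁ ∈ Set.Icc (0:ℝ) 1, 1 - ε < y₁ → y₁ < 1 → (n : ℕ∞) ≤ f y₁ + 1)

/-- A preindicatrix: an `ℕ∞`-valued function on `[0,1]` with values `≥ 1`,
satisfying Condition (1) and Condition (**) at every `y` with `f y = ∞`. -/
def Preindicatrix (f : ℝ → ℕ∞) : Prop :=
  (∀ y ∈ Set.Icc (0:ℝ) 1, 1 ≤ f y) ∧ Cond1 f ∧
    (∀ y ∈ Set.Icc (0:ℝ) 1, f y = ⊤ → CondStar f y)

/-!
Extend `f` by `1` to all of `ℝ`; the conditions at `0` and `1` then become instances of the ones at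
interior points, since the parity clause is automatic when one of the two neighbouring values
is `1`. At every `y` let `l` and `r` be the largest integers, possibly `∞`, with `2 * l + 1 ≤ f`
just to the left of `y` and `2 * r + 1 ≤ f` just to the right. Conditions (1) and (**) together say
exactly that `f y ≤ 1 + l + r`.

Let `s` be the largest integer with `2 * s + 1 ≤ f` near `y`, and split `f y - 1 = s + t`, with
`t = ∞` if `f y = ∞`. Then `s ≤ min l r` and `s ≤ t ≤ max l r`, so the functions
`p i = 1 + [i < s] + [i < t]` decrease in `i` and sum up correctly. Where `i < l`, the function
`p i` equals `3` just to the left of `y`, and similarly for `r`, so each `p i` again satisfies the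
inequality `p i ≤ 1 + l + r` for its own `l` and `r`.
-/

open Filter Topology

section ENat

theorem exists_natCast_add_eq_of_le_add {n : ℕ} {a b : ℕ∞} (h : n ≤ a + b) :
    ∃ k m : ℕ, k + m = n ∧ k ≤ a ∧ m ≤ b := by
  cases a with
  | top => exact ⟨n, 0, add_zero n, le_top, zero_le⟩
  | coe a =>
    rcases le_total n a with hna | han
    · exact ⟨n, 0, add_zero n, mod_cast hna, zero_le⟩
    · refine ⟨a, n - a, Nat.add_sub_of_le han, le_rfl, ?_⟩
      rw [ENat.natCast_sub]
      exact tsub_le_iff_left.2 h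

theorem le_of_forall_natCast_lt {a b : ℕ∞} (h : ∀ i : ℕ, (i : ℕ∞) < a → (i : ℕ∞) < b) : a ≤ b := by
  by_contra! hba
  lift b to ℕ using hba.ne_top
  exact lt_irrefl _ (h b hba)

theorem hasSum_one_top : HasSum (fun _ : ℕ => (1 : ℕ∞)) ⊤ := by
  refine hasSum_of_isLUB ⊤ ⟨fun _ _ => le_top, fun b hb => ?_⟩
  refine (ENat.eq_top_iff_forall_ge.2 fun n => ?_).ge
  simpa using hb ⟨Finset.range n, rfl⟩

theorem hasSum_ite_natCast_lt (a : ℕ∞) : HasSum (fun i : ℕ => if (i : ℕ∞) < a then 1 else 0) a := by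
  cases a with
  | top => simpa using hasSum_one_top
  | coe n =>
    have sum_eq : ∑ i ∈ Finset.range n, (if (i : ℕ∞) < n then 1 else 0 : ℕ∞) = n := by
      rw [Finset.sum_congr rfl fun i hi => if_pos (by simpa using hi)]
      simp
    simpa only [sum_eq] using hasSum_sum_of_ne_finset_zero
      (f := fun i : ℕ => if (i : ℕ∞) < n then (1 : ℕ∞) else 0) (s := Finset.range n)
      fun i hi => by simpa using hi

end ENat

section OddRank

variable {α : Type*} {F G : Filter α} {g : α → ℕ∞}

/-- The largest `k`, possibly `⊤`, such that `2 * k + 1 ≤ g` eventually along `F`. It measures the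
lower limit of `g` in steps of two, which is all that Conditions (1) and (**) see of it. The value
is `0` if there is no such `k`. -/
def oddRank (F : Filter α) (g : α → ℕ∞) : ℕ∞ :=
  ⨆ k ∈ {k : ℕ | ∀ᶠ z in F, (2 * k + 1 : ℕ∞) ≤ g z}, (k : ℕ∞)

theorem natCast_lt_oddRank_iff {i : ℕ} :
    (i : ℕ∞) < oddRank F g ↔ ∀ᶠ z in F, (2 * i + 3 : ℕ∞) ≤ g z := by
  rw [oddRank, lt_biSup_iff]
  constructor
  · rintro ⟨k, hk, hik⟩
    have hik : 2 * i + 3 ≤ 2 * k + 1 := by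
      have := Nat.cast_lt.1 hik
      lia
    filter_upwards [hk] with z hz
    exact le_trans (mod_cast hik) hz
  · intro h
    refine ⟨i + 1, h.mono fun z hz => le_of_eq_of_le ?_ hz, mod_cast i.lt_succ_self⟩
    push_cast
    ring

theorem oddRank_anti (h : F ≤ G) : oddRank G g ≤ oddRank F g :=
  le_of_forall_natCast_lt fun i hi => by
    rw [natCast_lt_oddRank_iff] at hi ⊢
    exact hi.filter_mono h

theorem oddRank_sup : oddRank (F ⊔ G) g = min (oddRank F g) (oddRank G g) := by
  refine le_antisymm (le_min (oddRank_anti le_sup_left) (oddRank_anti le_sup_right))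
    (le_of_forall_natCast_lt fun i hi => ?_)
  rw [lt_min_iff, natCast_lt_oddRank_iff, natCast_lt_oddRank_iff] at hi
  exact natCast_lt_oddRank_iff.2 (eventually_sup.2 hi)

theorem eventually_le_of_natCast_le_oddRank (hg : ∀ᶠ z in F, 1 ≤ g z) {k : ℕ}
    (hk : (k : ℕ∞) ≤ oddRank F g) : ∀ᶠ z in F, (2 * k + 1 : ℕ∞) ≤ g z := by
  cases k with
  | zero => simpa using hg
  | succ k =>
    rw [Nat.cast_succ, ENat.natCast_add_one_le_iff, natCast_lt_oddRank_iff] at hk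
    refine hk.mono fun z hz => le_of_eq_of_le ?_ hz
    push_cast
    ring

theorem frequently_le_of_oddRank_eq {k : ℕ} (h : oddRank F g = k) :
    ∃ᶠ z in F, g z ≤ 2 * k + 2 := by
  have : ¬ ∀ᶠ z in F, (2 * k + 3 : ℕ∞) ≤ g z := by
    rw [← natCast_lt_oddRank_iff, h]
    exact lt_irrefl _
  refine (not_eventually.1 this).mono fun z hz => ?_
  have : g z < ((2 * k + 2 : ℕ) : ℕ∞) + 1 := by
    push_cast
    rwa [not_le, ← two_add_one_eq_three, ← add_assoc] at hz
  exact_mod_cast ENat.lt_natCast_add_one_iff.1 this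

theorem two_mul_oddRank_pure_add_one_le {y : α} (hy : 1 ≤ g y) :
    2 * oddRank (pure y) g + 1 ≤ g y := by
  have two_mul_add_one_le (k : ℕ) (hk : (k : ℕ∞) ≤ oddRank (pure y) g) : 2 * k + 1 ≤ g y := by
    simpa using eventually_le_of_natCast_le_oddRank (by simpa using hy) hk
  cases h : oddRank (pure y) g with
  | top =>
    refine le_top.trans_eq (ENat.eq_top_iff_forall_ge.2 fun k => ?_).symm
    calc (k : ℕ∞) ≤ 2 * k + 1 := by exact_mod_cast (by lia : k ≤ 2 * k + 1)
      _ ≤ g y := two_mul_add_one_le k (h ▸ le_top)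
  | coe k => exact two_mul_add_one_le k h.ge

end OddRank

section OddBalanced

/-- The relation that Condition (1) imposes between the value `N` at a point and the values `a` and
`b` at nearby points to its left and right. -/
def OddBalanced (N a b : ℕ∞) : Prop :=
  2 * N ≤ a + b ∧
    (a + b = 2 * N → (∃ k : ℕ, a = k ∧ Odd k) ∧ (∃ k : ℕ, b = k ∧ Odd k))

theorem oddBalanced_of_le {k m : ℕ} {a b : ℕ∞} (ha : 2 * k + 1 ≤ a) (hb : 2 * m + 1 ≤ b) :
    OddBalanced (k + m + 1) a b := by
  have two_mul_eq : (2 * (k + m + 1) : ℕ∞) = (2 * k + 1) + (2 * m + 1) := by ring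
  refine ⟨two_mul_eq.trans_le (add_le_add ha hb), fun hab => ?_⟩
  have hab_top : a + b ≠ ⊤ := hab ▸ ENat.natCast_ne_top (2 * (k + m + 1))
  lift a to ℕ using ne_top_of_le_ne_top hab_top le_self_add
  lift b to ℕ using ne_top_of_le_ne_top hab_top le_add_self
  norm_cast at ha hb hab
  exact ⟨⟨a, rfl, k, by lia⟩, ⟨b, rfl, m, by lia⟩⟩

theorem OddBalanced.le_of_le {N k m : ℕ} {a b : ℕ∞} (h : OddBalanced N a b)
    (ha : a ≤ 2 * k + 2) (hb : b ≤ 2 * m + 2) : N ≤ k + m + 1 := by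
  obtain ⟨hN, odd_of_eq⟩ := h
  by_contra! hlt
  obtain ⟨rfl, hab⟩ : a = (2 * k + 2 : ℕ) ∧ a + b = 2 * N := by
    enat_to_nat
    lia
  obtain ⟨⟨j, hj, j_odd⟩, -⟩ := odd_of_eq hab
  have hj : 2 * k + 2 = j := mod_cast hj
  grind

theorem oddBalanced_one_left_iff {N : ℕ} {b : ℕ∞} : OddBalanced N 1 b ↔ 2 * N ≤ 1 + b := by
  refine ⟨And.left, fun h => ⟨h, fun hb => ⟨⟨1, rfl, odd_one⟩, ?_⟩⟩⟩
  cases b with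
  | top => exact absurd hb.symm (ENat.natCast_ne_top (2 * N))
  | coe b =>
    have hb : 1 + b = 2 * N := mod_cast hb
    exact ⟨b, rfl, by grind⟩

theorem oddBalanced_comm {N a b : ℕ∞} : OddBalanced N a b ↔ OddBalanced N b a := by
  rw [OddBalanced, OddBalanced, add_comm b a, and_comm (a := ∃ k : ℕ, b = k ∧ Odd k)]

variable {α : Type*} {F G : Filter α} {g : α → ℕ∞}

theorem frequently_prod_le_of_oddRank_eq {k m : ℕ} (hF : oddRank F g = k) (hG : oddRank G g = m) :
    ∃ᶠ p in F ×ˢ G, g p.1 ≤ 2 * k + 2 ∧ g p.2 ≤ 2 * m + 2 :=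
  frequently_prod_and.2 ⟨frequently_le_of_oddRank_eq hF, frequently_le_of_oddRank_eq hG⟩

theorem eventually_oddBalanced_of_le (hg : ∀ z, 1 ≤ g z) {n : ℕ}
    (h : (n : ℕ∞) ≤ oddRank F g + oddRank G g) :
    ∀ᶠ p in F ×ˢ G, OddBalanced (n + 1) (g p.1) (g p.2) := by
  obtain ⟨k, m, rfl, hk, hm⟩ := exists_natCast_add_eq_of_le_add h
  filter_upwards [(eventually_le_of_natCast_le_oddRank (.of_forall hg) hk).prod_mk
    (eventually_le_of_natCast_le_oddRank (.of_forall hg) hm)] with p hp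
  exact_mod_cast oddBalanced_of_le hp.1 hp.2

theorem eventually_oddBalanced_add_one_iff (hg : ∀ z, 1 ≤ g z) {n : ℕ} :
    (∀ᶠ p in F ×ˢ G, OddBalanced (n + 1) (g p.1) (g p.2)) ↔
      (n : ℕ∞) ≤ oddRank F g + oddRank G g := by
  refine ⟨fun h => ?_, eventually_oddBalanced_of_le hg⟩
  cases hF : oddRank F g with
  | top => simp
  | coe k =>
    cases hG : oddRank G g with
    | top => simp
    | coe m =>
      obtain ⟨p, hp, hpk, hpm⟩ := (h.and_frequently (frequently_prod_le_of_oddRank_eq hF hG)).exists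
      exact_mod_cast Nat.le_of_succ_le_succ (OddBalanced.le_of_le (mod_cast hp) hpk hpm)

theorem forall_eventually_natCast_le_add_iff (hg : ∀ z, 1 ≤ g z) :
    (∀ n : ℕ, ∀ᶠ p in F ×ˢ G, (n : ℕ∞) ≤ g p.1 + g p.2) ↔ oddRank F g + oddRank G g = ⊤ := by
  constructor
  · intro h
    cases hF : oddRank F g with
    | top => simp
    | coe k =>
      cases hG : oddRank G g with
      | top => simp
      | coe m =>
        obtain ⟨p, hp, hpk, hpm⟩ := ((h (2 * k + 2 * m + 5)).and_frequently
          (frequently_prod_le_of_oddRank_eq hF hG)).exists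
        have : ((2 * k + 2 * m + 5 : ℕ) : ℕ∞) ≤ (2 * k + 2) + (2 * m + 2) :=
          hp.trans (add_le_add hpk hpm)
        have : 2 * k + 2 * m + 5 ≤ (2 * k + 2) + (2 * m + 2) := mod_cast this
        lia
  · intro h n
    filter_upwards [eventually_oddBalanced_of_le hg (h ▸ le_top : (n : ℕ∞) ≤ _)] with p hp
    exact le_trans (mod_cast (by lia : n ≤ 2 * (n + 1))) hp.1

/-- Conditions (1) and (**) at a point with value `N`, where `F` and `G` are the filters of
neighbourhoods of the point to its left and right. -/
def BalancedAlong (F G : Filter α) (g : α → ℕ∞) (N : ℕ∞) : Prop :=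
  (N ≠ ⊤ → ∀ᶠ p in F ×ˢ G, OddBalanced N (g p.1) (g p.2)) ∧
    (N = ⊤ → ∀ n : ℕ, ∀ᶠ p in F ×ˢ G, (n : ℕ∞) ≤ g p.1 + g p.2)

theorem balancedAlong_iff (hg : ∀ z, 1 ≤ g z) {N : ℕ∞} (hN : 1 ≤ N) :
    BalancedAlong F G g N ↔ N ≤ 1 + (oddRank F g + oddRank G g) := by
  obtain ⟨n, rfl⟩ := exists_add_of_le hN
  rw [ENat.add_le_add_iff_left ENat.one_ne_top]
  cases n with
  | top => simp [BalancedAlong, forall_eventually_natCast_le_add_iff hg]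
  | coe n =>
    rw [← eventually_oddBalanced_add_one_iff hg, add_comm 1]
    simp [BalancedAlong]

end OddBalanced

section Layers

variable {α : Type*} [TopologicalSpace α] {g : α → ℕ∞}

/-- The number of layers of `g` that take the value `3` at `y`. -/
def core (g : α → ℕ∞) (y : α) : ℕ∞ := oddRank (𝓝 y) g

/-- The number of layers of `g` that exceed `1` at `y`. It is `g y - 1 - core g y`, because
`core g y` of the layers have the value `3`; the maximum with `core g y` only matters when
`g y` and `core g y` are both `⊤`, where the truncated difference is `0`. -/
def shell (g : α → ℕ∞) (y : α) : ℕ∞ := max (core g y) (g y - 1 - core g y)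

/-- The `i`-th term of the decomposition of `g`. -/
def layer (g : α → ℕ∞) (i : ℕ) (y : α) : ℕ∞ :=
  1 + ((if (i : ℕ∞) < core g y then 1 else 0) + (if (i : ℕ∞) < shell g y then 1 else 0))

theorem core_le_shell (g : α → ℕ∞) (y : α) : core g y ≤ shell g y := le_max_left _ _

theorem two_mul_core_add_one_le {y : α} (hy : 1 ≤ g y) : 2 * core g y + 1 ≤ g y :=
  calc 2 * core g y + 1 ≤ 2 * oddRank (pure y) g + 1 := by
        gcongr
        exact oddRank_anti (pure_le_nhds y)
    _ ≤ g y := two_mul_oddRank_pure_add_one_le hy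

theorem core_add_shell {y : α} (hy : 1 ≤ g y) : core g y + shell g y = g y - 1 := by
  have two_mul_core_le : 2 * core g y ≤ g y - 1 :=
    ENat.le_sub_of_add_le_right ENat.one_ne_top (two_mul_core_add_one_le hy)
  have core_le : core g y ≤ g y - 1 := by
    rw [two_mul] at two_mul_core_le
    exact le_self_add.trans two_mul_core_le
  rw [shell, add_max, add_tsub_cancel_of_le core_le, ← two_mul, max_eq_right two_mul_core_le]

theorem shell_eq_top {y : α} (hy : g y = ⊤) : shell g y = ⊤ := by
  by_cases h : core g y = ⊤ <;> simp [shell, hy, h]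

theorem layer_eq_one_or_two_or_three (g : α → ℕ∞) (i : ℕ) (y : α) :
    layer g i y = 1 ∨ layer g i y = 2 ∨ layer g i y = 3 := by
  unfold layer
  split_ifs <;> norm_num

theorem layer_succ_le (g : α → ℕ∞) (i : ℕ) (y : α) : layer g (i + 1) y ≤ layer g i y := by
  have natCast_lt {a : ℕ∞} (h : ((i + 1 : ℕ) : ℕ∞) < a) : (i : ℕ∞) < a :=
    lt_trans (mod_cast i.lt_succ_self) h
  unfold layer
  gcongr <;> split_ifs <;> simp_all

theorem two_le_layer {y : α} (hy : g y = ⊤) (i : ℕ) : 2 ≤ layer g i y := by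
  rw [layer, shell_eq_top hy, if_pos (ENat.natCast_lt_top i), ← one_add_one_eq_two]
  gcongr
  exact le_add_self

theorem layer_eq_three {i : ℕ} {y : α} (h : (i : ℕ∞) < core g y) : layer g i y = 3 := by
  rw [layer, if_pos h, if_pos (h.trans_le (core_le_shell g y))]
  norm_num

theorem one_add_tsum_layer_sub_one {y : α} (hy : 1 ≤ g y) :
    1 + ∑' i : ℕ, (layer g i y - 1) = g y := by
  have layer_sub_one (i : ℕ) : layer g i y - 1 =
      (if (i : ℕ∞) < core g y then 1 else 0) + (if (i : ℕ∞) < shell g y then 1 else 0) :=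
    (ENat.addLECancellable_of_ne_top ENat.one_ne_top).add_tsub_cancel_left
  simp_rw [layer_sub_one]
  rw [((hasSum_ite_natCast_lt _).add (hasSum_ite_natCast_lt _)).tsum_eq, core_add_shell hy,
    add_tsub_cancel_of_le hy]

theorem layer_eq_one {y : α} (hy : g y = 1) (i : ℕ) : layer g i y = 1 := by
  have : core g y + shell g y = 0 := by rw [core_add_shell hy.ge, hy, tsub_self]
  rw [add_eq_zero] at this
  simp [layer, this]

theorem one_le_oddRank_layer {s : Set α} (hs : IsOpen s) {i : ℕ} {y : α}
    (hi : (i : ℕ∞) < oddRank (𝓝[s] y) g) : 1 ≤ oddRank (𝓝[s] y) (layer g i) := by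
  rw [Order.one_le_iff_pos, ← Nat.cast_zero, natCast_lt_oddRank_iff]
  rw [natCast_lt_oddRank_iff, ← eventually_eventually_nhdsWithin] at hi
  filter_upwards [hi, self_mem_nhdsWithin] with z hz hzs
  rw [hs.nhdsWithin_eq hzs, ← natCast_lt_oddRank_iff] at hz
  simp [layer_eq_three hz]

end Layers

section IsBalanced

variable {α : Type*} [TopologicalSpace α] [LinearOrder α] {g : α → ℕ∞}

/-- A function satisfying, at every point, the inequality that Conditions (1) and (**) amount to;
see `preindicatrix_iff_isBalanced`. -/
structure IsBalanced (g : α → ℕ∞) : Prop where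
  one_le (y : α) : 1 ≤ g y
  le_one_add (y : α) : g y ≤ 1 + (oddRank (𝓝[<] y) g + oddRank (𝓝[>] y) g)

theorem core_eq_min (g : α → ℕ∞) (y : α) :
    core g y = min (min (oddRank (𝓝[<] y) g) (oddRank (𝓝[>] y) g)) (oddRank (pure y) g) := by
  rw [core, ← nhdsNE_sup_pure, ← nhdsLT_sup_nhdsGT, oddRank_sup, oddRank_sup]

theorem IsBalanced.le_one_add_max_add_core (hg : IsBalanced g) (y : α) :
    g y ≤ 1 + (max (oddRank (𝓝[<] y) g) (oddRank (𝓝[>] y) g) + core g y) := by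
  have le_one_add := hg.le_one_add y
  have core_eq := core_eq_min g y
  set l := oddRank (𝓝[<] y) g
  set r := oddRank (𝓝[>] y) g
  rcases le_or_gt (min l r) (oddRank (pure y) g) with hle | hlt
  · rwa [core_eq, min_eq_left hle, max_add_min]
  · rw [core_eq, min_eq_right hlt.le]
    lift oddRank (pure y) g to ℕ using hlt.ne_top with k hk
    have g_le : g y ≤ 2 * k + 2 := by simpa using frequently_le_of_oddRank_eq hk.symm
    calc g y ≤ 2 * k + 2 := g_le
      _ = 1 + ((k + 1) + k) := by ring
      _ ≤ 1 + (max l r + k) := by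
        gcongr
        exact ENat.natCast_add_one_le_iff.2 (hlt.trans_le min_le_max)

theorem IsBalanced.shell_le_max (hg : IsBalanced g) (y : α) :
    shell g y ≤ max (oddRank (𝓝[<] y) g) (oddRank (𝓝[>] y) g) := by
  refine max_le (le_max_of_le_left (oddRank_anti nhdsWithin_le_nhds)) ?_
  rw [tsub_le_iff_right, tsub_le_iff_left]
  exact hg.le_one_add_max_add_core y

theorem isBalanced_layer [OrderClosedTopology α] (hg : IsBalanced g) (i : ℕ) :
    IsBalanced (layer g i) where
  one_le _ := le_self_add
  le_one_add y := by
    have left (h : (i : ℕ∞) < oddRank (𝓝[<] y) g) := one_le_oddRank_layer isOpen_Iio h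
    have right (h : (i : ℕ∞) < oddRank (𝓝[>] y) g) := one_le_oddRank_layer isOpen_Ioi h
    refine add_le_add le_rfl ?_
    split_ifs with hcore hshell hshell
    · exact add_le_add (left (hcore.trans_le (oddRank_anti nhdsWithin_le_nhds)))
        (right (hcore.trans_le (oddRank_anti nhdsWithin_le_nhds)))
    · exact absurd (hcore.trans_le (core_le_shell g y)) hshell
    · rw [zero_add]
      rcases lt_max_iff.1 (hshell.trans_le (hg.shell_le_max y)) with h | h
      · exact (left h).trans le_self_add
      · exact (right h).trans le_add_self
    · simp

end IsBalanced

section UnitInterval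

variable {f : ℝ → ℕ∞} {y : ℝ} {Q : ℕ∞ → ℕ∞ → Prop}

theorem nhdsLT_hasBasis_Ioo_sub (y : ℝ) :
    (𝓝[<] y).HasBasis (fun ε : ℝ => 0 < ε) fun ε => Ioo (y - ε) y := by
  refine (nhdsWithin_hasBasis Metric.nhds_basis_ball (Iio y)).congr (fun _ => Iff.rfl)
    fun ε hε => ?_
  rw [Real.ball_eq_Ioo, Ioo_inter_Iio, min_eq_right (by linarith)]

theorem nhdsGT_hasBasis_Ioo_add (y : ℝ) :
    (𝓝[>] y).HasBasis (fun ε : ℝ => 0 < ε) fun ε => Ioo y (y + ε) := by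
  refine (nhdsWithin_hasBasis Metric.nhds_basis_ball (Ioi y)).congr (fun _ => Iff.rfl)
    fun ε hε => ?_
  rw [Real.ball_eq_Ioo, Ioo_inter_Ioi, max_eq_right (by linarith)]

theorem nhdsLT_prod_nhdsGT_hasBasis (y : ℝ) : (𝓝[<] y ×ˢ 𝓝[>] y).HasBasis (fun ε : ℝ => 0 < ε)
    fun ε => Ioo (y - ε) y ×ˢ Ioo y (y + ε) :=
  (nhdsLT_hasBasis_Ioo_sub y).prod_same_index_mono (nhdsGT_hasBasis_Ioo_add y)
    (fun _ _ _ _ h => Ioo_subset_Ioo_left (by linarith))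
    (fun _ _ _ _ h => Ioo_subset_Ioo_right (by linarith))

theorem eventually_mulIndicator_iff_of_mem_Ioo (hy : y ∈ Ioo (0 : ℝ) 1) :
    (∀ᶠ p in 𝓝[<] y ×ˢ 𝓝[>] y,
        Q ((Icc 0 1).mulIndicator f p.1) ((Icc 0 1).mulIndicator f p.2)) ↔
      ∃ ε > 0, ∀ y₁ ∈ Icc (0 : ℝ) 1, ∀ y₂ ∈ Icc (0 : ℝ) 1,
        y - ε < y₁ → y₁ < y → y < y₂ → y₂ < y + ε → Q (f y₁) (f y₂) := by
  have mem_Icc : ∀ᶠ z in 𝓝 y, z ∈ Icc (0 : ℝ) 1 := Icc_mem_nhds hy.1 hy.2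
  have mem_Icc_pair : ∀ᶠ p in 𝓝[<] y ×ˢ 𝓝[>] y, p.1 ∈ Icc (0 : ℝ) 1 ∧ p.2 ∈ Icc (0 : ℝ) 1 :=
    (eventually_nhdsWithin_of_eventually_nhds mem_Icc).prod_mk
      (eventually_nhdsWithin_of_eventually_nhds mem_Icc)
  calc _ ↔ ∀ᶠ p in 𝓝[<] y ×ˢ 𝓝[>] y,
        p.1 ∈ Icc (0 : ℝ) 1 → p.2 ∈ Icc (0 : ℝ) 1 → Q (f p.1) (f p.2) :=
        eventually_congr <| mem_Icc_pair.mono fun p hp => by simp [hp]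
    _ ↔ _ := by
        rw [(nhdsLT_prod_nhdsGT_hasBasis y).eventually_iff]
        simp only [mem_prod, mem_Ioo, Prod.forall]
        grind

theorem eventually_mulIndicator_zero_iff :
    (∀ᶠ p in 𝓝[<] (0 : ℝ) ×ˢ 𝓝[>] (0 : ℝ),
        Q ((Icc 0 1).mulIndicator f p.1) ((Icc 0 1).mulIndicator f p.2)) ↔
      ∃ ε > 0, ∀ y₂ ∈ Icc (0 : ℝ) 1, 0 < y₂ → y₂ < ε → Q 1 (f y₂) := by
  have left_notMem : ∀ᶠ z in 𝓝[<] (0 : ℝ), z ∉ Icc (0 : ℝ) 1 :=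
    eventually_mem_nhdsWithin.mono fun z hz hz' => hz'.1.not_gt hz
  have right_mem : ∀ᶠ z in 𝓝[>] (0 : ℝ), z ∈ Icc (0 : ℝ) 1 := Icc_mem_nhdsGT one_pos
  calc _ ↔ ∀ᶠ p in 𝓝[<] (0 : ℝ) ×ˢ 𝓝[>] (0 : ℝ), p.2 ∈ Icc (0 : ℝ) 1 → Q 1 (f p.2) :=
        eventually_congr <| (left_notMem.prod_mk right_mem).mono fun p hp => by simp [hp]
    _ ↔ ∀ᶠ z in 𝓝[>] (0 : ℝ), z ∈ Icc (0 : ℝ) 1 → Q 1 (f z) := by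
        conv_rhs => rw [← map_snd_prod (𝓝[<] (0 : ℝ)) (𝓝[>] (0 : ℝ)), eventually_map]
    _ ↔ _ := by
        rw [(nhdsGT_hasBasis_Ioo_add 0).eventually_iff]
        simp only [mem_Ioo, zero_add]
        grind

theorem eventually_mulIndicator_one_iff :
    (∀ᶠ p in 𝓝[<] (1 : ℝ) ×ˢ 𝓝[>] (1 : ℝ),
        Q ((Icc 0 1).mulIndicator f p.1) ((Icc 0 1).mulIndicator f p.2)) ↔
      ∃ ε > 0, ∀ y₁ ∈ Icc (0 : ℝ) 1, 1 - ε < y₁ → y₁ < 1 → Q (f y₁) 1 := by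
  have left_mem : ∀ᶠ z in 𝓝[<] (1 : ℝ), z ∈ Icc (0 : ℝ) 1 := Icc_mem_nhdsLT one_pos
  have right_notMem : ∀ᶠ z in 𝓝[>] (1 : ℝ), z ∉ Icc (0 : ℝ) 1 :=
    eventually_mem_nhdsWithin.mono fun z hz hz' => hz'.2.not_gt hz
  calc _ ↔ ∀ᶠ p in 𝓝[<] (1 : ℝ) ×ˢ 𝓝[>] (1 : ℝ), p.1 ∈ Icc (0 : ℝ) 1 → Q (f p.1) 1 :=
        eventually_congr <| (left_mem.prod_mk right_notMem).mono fun p hp => by simp [hp]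
    _ ↔ ∀ᶠ z in 𝓝[<] (1 : ℝ), z ∈ Icc (0 : ℝ) 1 → Q (f z) 1 := by
        conv_rhs => rw [← map_fst_prod (𝓝[<] (1 : ℝ)) (𝓝[>] (1 : ℝ)), eventually_map]
    _ ↔ _ := by
        rw [(nhdsLT_hasBasis_Ioo_sub 1).eventually_iff]
        simp only [mem_Ioo]
        grind

theorem forall_mem_Icc_iff_Ioo_and_endpoints {α : Type*} [PartialOrder α] {a b : α} (hab : a ≤ b)
    {P : α → Prop} : (∀ y ∈ Icc a b, P y) ↔ (∀ y ∈ Ioo a b, P y) ∧ P a ∧ P b := by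
  refine ⟨fun h => ⟨fun y hy => h y (Ioo_subset_Icc_self hy), h a ⟨le_rfl, hab⟩, h b ⟨hab, le_rfl⟩⟩,
    fun ⟨interior, left, right⟩ y hy => ?_⟩
  rcases eq_endpoints_or_mem_Ioo_of_mem_Icc hy with rfl | rfl | hy
  exacts [left, right, interior y hy]

theorem cond1_iff : Cond1 f ↔ ∀ y ∈ Icc (0 : ℝ) 1, f y ≠ ⊤ → ∀ᶠ p in 𝓝[<] y ×ˢ 𝓝[>] y,
    OddBalanced (f y) ((Icc 0 1).mulIndicator f p.1) ((Icc 0 1).mulIndicator f p.2) := by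
  rw [forall_mem_Icc_iff_Ioo_and_endpoints zero_le_one]
  refine and_congr (forall₃_congr fun y hy _ => ?_)
    (and_congr (forall_congr' fun h0 => ?_) (forall_congr' fun h1 => ?_))
  · exact (eventually_mulIndicator_iff_of_mem_Ioo (Q := OddBalanced (f y)) hy).symm
  · rw [eventually_mulIndicator_zero_iff]
    lift f 0 to ℕ using h0 with N
    simp only [oddBalanced_one_left_iff]
  · rw [eventually_mulIndicator_one_iff]
    lift f 1 to ℕ using h1 with N
    simp only [oddBalanced_comm (b := 1), oddBalanced_one_left_iff, add_comm]

theorem condStar_iff (hy : y ∈ Icc (0 : ℝ) 1) :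
    CondStar f y ↔ ∀ n : ℕ, ∀ᶠ p in 𝓝[<] y ×ˢ 𝓝[>] y,
      (n : ℕ∞) ≤ (Icc 0 1).mulIndicator f p.1 + (Icc 0 1).mulIndicator f p.2 := by
  refine forall_congr' fun n => ?_
  rcases eq_endpoints_or_mem_Ioo_of_mem_Icc hy with rfl | rfl | hy
  · rw [eventually_mulIndicator_zero_iff (Q := fun a b => n ≤ a + b)]
    grind
  · rw [eventually_mulIndicator_one_iff (Q := fun a b => n ≤ a + b)]
    grind
  · rw [eventually_mulIndicator_iff_of_mem_Ioo (Q := fun a b => n ≤ a + b) hy]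
    simp only [hy.1.ne', hy.2.ne, false_imp_iff, and_true]

theorem preindicatrix_iff_forall_balancedAlong : Preindicatrix f ↔ ∀ y ∈ Icc (0 : ℝ) 1,
    1 ≤ f y ∧ BalancedAlong (𝓝[<] y) (𝓝[>] y) ((Icc 0 1).mulIndicator f) (f y) := by
  simp only [Preindicatrix, BalancedAlong, cond1_iff, forall_and]
  exact and_congr_right' <| and_congr_right' <| forall₃_congr fun y hy _ => condStar_iff hy

theorem preindicatrix_iff_isBalanced :
    Preindicatrix f ↔ IsBalanced ((Icc (0 : ℝ) 1).mulIndicator f) := by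
  rw [preindicatrix_iff_forall_balancedAlong]
  constructor
  · intro h
    have one_le : ∀ y, 1 ≤ (Icc (0 : ℝ) 1).mulIndicator f y :=
      one_le_mulIndicator fun y hy => (h y hy).1
    refine ⟨one_le, fun y => ?_⟩
    by_cases hy : y ∈ Icc (0 : ℝ) 1
    · rw [mulIndicator_of_mem hy]
      exact (balancedAlong_iff one_le (h y hy).1).1 (h y hy).2
    · rw [mulIndicator_of_notMem hy]
      exact le_self_add
  · intro h y hy
    have one_le := h.one_le y
    have le_one_add := h.le_one_add y
    rw [mulIndicator_of_mem hy] at one_le le_one_add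
    exact ⟨one_le, (balancedAlong_iff h.one_le one_le).2 le_one_add⟩

theorem preindicatrix_of_isBalanced (hf : IsBalanced f) (hf_one : ∀ y ∉ Icc (0 : ℝ) 1, f y = 1) :
    Preindicatrix f := by
  rw [preindicatrix_iff_isBalanced, mulIndicator_eq_self.2]
  · exact hf
  · exact fun y hy => not_imp_comm.1 (hf_one y) hy

end UnitInterval

theorem preindicatrix_series_decomposition (f : ℝ → ℕ∞) (hf : Preindicatrix f) :
    ∃ p : ℕ → ℝ → ℕ∞,
      (∀ i, Preindicatrix (p i)) ∧
      (∀ i, ∀ y ∈ Set.Icc (0:ℝ) 1, p i y = 1 ∨ p i y = 2 ∨ p i y = 3) ∧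
      (∀ i, ∀ y ∈ Set.Icc (0:ℝ) 1, p (i + 1) y ≤ p i y) ∧
      (∀ y ∈ Set.Icc (0:ℝ) 1, f y = 1 + ∑' i : ℕ, (p i y - 1)) ∧
      (∀ y ∈ Set.Icc (0:ℝ) 1, f y = ⊤ → ∀ i, 2 ≤ p i y) := by
  have hg : IsBalanced ((Icc (0 : ℝ) 1).mulIndicator f) := preindicatrix_iff_isBalanced.1 hf
  have g_eq {y : ℝ} (hy : y ∈ Icc (0 : ℝ) 1) : (Icc 0 1).mulIndicator f y = f y :=
    mulIndicator_of_mem hy f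
  refine ⟨layer ((Icc 0 1).mulIndicator f), fun i => ?_,
    fun i y _ => layer_eq_one_or_two_or_three _ i y, fun i y _ => layer_succ_le _ i y,
    fun y hy => ?_, fun y hy hy_top => two_le_layer ((g_eq hy).trans hy_top)⟩
  · exact preindicatrix_of_isBalanced (isBalanced_layer hg i) fun y hy =>
      layer_eq_one (mulIndicator_of_notMem hy f) i
  · rw [one_add_tsum_layer_sub_one (hg.one_le y), g_eq hy]
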